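/- The 6×6 integer matrix A_{3,II} with rows [2,-2,-10,-14,-10,-2], [-2,2,-2,-10,-14,-10], [-10,-2,2,-2,-10,-14], [-14,-10,-2,2,-2,-10], [-10,-14,-10,-2,2,-2], [-2,-10,-14,-10,-2,2] satisfies: (a) it is a symmetric generalized Cartan matrix (symmetric, all diagonal entries 2, all off-diagonal entries nonpositive); (b) it has rank 3 over ℚ; (c) the real quadratic form x ↦ xᵀAx on ℝ⁶ is equivalent to the weighted sum of squares with weights (1,1,−1,0,0,0), i.e. A is hyperbolic of rank 3; (d) there exists c ∈ ℚ⁶ with Ac = −(1,…,1)ᵀ and cᵀAc < 0 (a lattice Weyl vector of negative square). -/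

import Mathlib

open Matrix

/-! The matrix is circulant with an even symbol, so it is diagonalised by the real characters of
`ℤ/6`; as `2 cos (π j / 3)` is an integer, these eigenvectors can be taken integral. The
eigenvalues are `24, 24, -36, 0, 0, 0`, which gives the rank and, after rescaling the orthogonal
eigenvectors, the signature. The eigenvector `(1, …, 1)` of eigenvalue `-36` is a multiple of the
Weyl vector. -/

section OrthogonalEigenbasis

variable {n R K : Type*} [Fintype n] [DecidableEq n] [CommRing R] [Field K]

theorem isUnit_det_of_transpose_mul_self_eq_diagonal {Q : Matrix n n R} {m : n → R}
    (hgram : Qᵀ * Q = diagonal m) (hm : ∀ i, IsUnit (m i)) : IsUnit Q.det := by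
  have hdet : Qᵀ.det * Q.det = ∏ i, m i := by rw [← det_mul, hgram, det_diagonal]
  refine isUnit_of_mul_isUnit_right (x := Qᵀ.det) ?_
  rw [hdet]
  exact IsUnit.prod_univ_iff.2 hm

theorem rank_eq_card_ne_zero_of_mul_eq_mul_diagonal [DecidableEq K] {A Q : Matrix n n K}
    {l : n → K} (hQ : IsUnit Q.det) (heig : A * Q = Q * diagonal l) :
    A.rank = Fintype.card {i // l i ≠ 0} := by
  rw [← rank_mul_eq_left_of_isUnit_det Q A hQ, heig, rank_mul_eq_right_of_isUnit_det Q _ hQ,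
    rank_diagonal]

theorem exists_ne_zero_mul_mul_self_eq_sign (x : ℝ) :
    ∃ s : ℝ, s ≠ 0 ∧ s * x * s = SignType.sign x := by
  obtain rfl | hx := eq_or_ne x 0
  · exact ⟨1, one_ne_zero, by simp⟩
  · have hsqrt : √|x| ≠ 0 := (Real.sqrt_pos.2 (abs_pos.2 hx)).ne'
    refine ⟨(√|x|)⁻¹, inv_ne_zero hsqrt, ?_⟩
    calc (√|x|)⁻¹ * x * (√|x|)⁻¹
        = (√|x|)⁻¹ * (SignType.sign x * (√|x| * √|x|)) * (√|x|)⁻¹ := by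
          rw [Real.mul_self_sqrt (abs_nonneg x), sign_mul_abs]
      _ = SignType.sign x := by field_simp

theorem exists_congruence_diagonal_sign_of_mul_eq_mul_diagonal {A Q : Matrix n n ℝ} {m l : n → ℝ}
    (hgram : Qᵀ * Q = diagonal m) (hm : ∀ i, 0 < m i) (heig : A * Q = Q * diagonal l) :
    ∃ P : Matrix n n ℝ, IsUnit P.det ∧
      Pᵀ * A * P = diagonal fun i ↦ (SignType.sign (l i) : ℝ) := by
  choose s hs_ne hs using fun i ↦ exists_ne_zero_mul_mul_self_eq_sign (m i * l i)
  refine ⟨Q * diagonal s, ?_, ?_⟩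
  · rw [det_mul, det_diagonal]
    exact (isUnit_det_of_transpose_mul_self_eq_diagonal hgram fun i ↦ (hm i).ne'.isUnit).mul
      (IsUnit.prod_univ_iff.2 fun i ↦ (hs_ne i).isUnit)
  · calc (Q * diagonal s)ᵀ * A * (Q * diagonal s)
        = diagonal s * (Qᵀ * (A * Q)) * diagonal s := by
          simp only [transpose_mul, diagonal_transpose, Matrix.mul_assoc]
      _ = diagonal s * (diagonal m * diagonal l) * diagonal s := by
          rw [heig, ← Matrix.mul_assoc Qᵀ, hgram]
      _ = diagonal fun i ↦ s i * (m i * l i) * s i := by simp only [diagonal_mul_diagonal]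
      _ = diagonal fun i ↦ (SignType.sign (l i) : ℝ) := by
          simp only [hs, sign_mul, sign_pos (hm _), one_mul]

end OrthogonalEigenbasis

theorem exists_mulVec_eq_neg_one_of_mulVec_one_eq_smul {n K : Type*} [Fintype n] [Nonempty n]
    [Field K] [LinearOrder K] [IsStrictOrderedRing K] {A : Matrix n n K} {s : K}
    (hA : A *ᵥ 1 = s • 1) (hs : s < 0) :
    ∃ c : n → K, (∀ i, (A *ᵥ c) i = -1) ∧ c ⬝ᵥ A *ᵥ c < 0 := by
  have hc : A *ᵥ (-s⁻¹ • 1) = -1 := by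
    rw [mulVec_smul, hA, smul_smul, neg_mul, inv_mul_cancel₀ hs.ne, neg_one_smul]
  refine ⟨-s⁻¹ • 1, congrFun hc, ?_⟩
  rw [hc, dotProduct_neg, smul_dotProduct, one_dotProduct_one, smul_eq_mul, neg_mul, neg_neg]
  exact mul_neg_of_neg_of_pos (inv_lt_zero.2 hs) (Nat.cast_pos.2 Fintype.card_pos)

theorem circulant_mulVec_one {G R : Type*} [AddGroup G] [Fintype G] [NonAssocSemiring R]
    (v : G → R) : circulant v *ᵥ 1 = (∑ i, v i) • 1 := by
  ext i
  simpa [mulVec, dotProduct] using (Equiv.subLeft i).sum_comp v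

section HexagonalCirculant

variable {R K : Type*} [CommRing R] [Field K] [CharZero K]

variable (R) in
/-- The orthogonal eigenbasis (as columns) shared by all circulant matrices of size 6 with even
symbol. Up to scaling, the columns are real or imaginary parts of the characters
`k ↦ exp (2πi j k / 6)` with frequencies `j = 1, 1, 0, 2, 2, 3`, in this order. -/
def hexEigenbasis : Matrix (Fin 6) (Fin 6) R :=
  !![ 2,  0, 1,  2,  0,  1;
      1,  1, 1, -1,  1, -1;
     -1,  1, 1, -1, -1,  1;
     -2,  0, 1,  2,  0, -1;
     -1, -1, 1, -1,  1,  1;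
      1, -1, 1, -1, -1, -1]

/-- The eigenvalues `∑ k, v k * cos (2π j k / 6)` of the circulant matrix with even symbol `v`, in
the order of the columns of `hexEigenbasis` and simplified by means of `v 4 = v 2`, `v 5 = v 1`. -/
def hexEigenvalue (v : Fin 6 → R) : Fin 6 → R :=
  ![v 0 + v 1 - v 2 - v 3, v 0 + v 1 - v 2 - v 3, v 0 + 2 * v 1 + 2 * v 2 + v 3,
    v 0 - v 1 - v 2 + v 3, v 0 - v 1 - v 2 + v 3, v 0 - 2 * v 1 + 2 * v 2 - v 3]

theorem hexEigenbasis_transpose_mul_self :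
    (hexEigenbasis R)ᵀ * hexEigenbasis R = diagonal ![12, 4, 6, 12, 4, 6] := by
  ext i j
  fin_cases i <;> fin_cases j <;>
    simp [hexEigenbasis, mul_apply, Fin.sum_univ_six] <;> norm_num

theorem isUnit_det_hexEigenbasis : IsUnit (hexEigenbasis K).det := by
  refine isUnit_det_of_transpose_mul_self_eq_diagonal hexEigenbasis_transpose_mul_self fun i ↦ ?_
  fin_cases i <;> simp

theorem circulant_mul_hexEigenbasis {v : Fin 6 → R} (hv : ∀ i, v (-i) = v i) :
    circulant v * hexEigenbasis R = hexEigenbasis R * diagonal (hexEigenvalue v) := by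
  have h4 : v 4 = v 2 := hv 2
  have h5 : v 5 = v 1 := hv 1
  have hcirculant : circulant v =
      !![v 0, v 1, v 2, v 3, v 2, v 1;
         v 1, v 0, v 1, v 2, v 3, v 2;
         v 2, v 1, v 0, v 1, v 2, v 3;
         v 3, v 2, v 1, v 0, v 1, v 2;
         v 2, v 3, v 2, v 1, v 0, v 1;
         v 1, v 2, v 3, v 2, v 1, v 0] := by
    ext i j
    fin_cases i <;> fin_cases j <;> first | rfl | exact h5 | exact h4
  rw [hcirculant]
  ext i j
  rw [mul_diagonal]
  fin_cases i <;> fin_cases j <;>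
    simp [hexEigenbasis, hexEigenvalue, mul_apply, Fin.sum_univ_six] <;> ring

theorem rank_circulant_eq_card_hexEigenvalue_ne_zero [DecidableEq K] {v : Fin 6 → K}
    (hv : ∀ i, v (-i) = v i) :
    (circulant v).rank = Fintype.card {i // hexEigenvalue v i ≠ 0} :=
  rank_eq_card_ne_zero_of_mul_eq_mul_diagonal isUnit_det_hexEigenbasis
    (circulant_mul_hexEigenbasis hv)

theorem exists_congruence_circulant_diagonal_sign_hexEigenvalue {v : Fin 6 → ℝ}
    (hv : ∀ i, v (-i) = v i) :
    ∃ P : Matrix (Fin 6) (Fin 6) ℝ, IsUnit P.det ∧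
      Pᵀ * circulant v * P = diagonal fun i ↦ (SignType.sign (hexEigenvalue v i) : ℝ) := by
  refine exists_congruence_diagonal_sign_of_mul_eq_mul_diagonal hexEigenbasis_transpose_mul_self
    (fun i ↦ ?_) (circulant_mul_hexEigenbasis hv)
  fin_cases i <;> simp

theorem hexEigenvalue_intCast (v : Fin 6 → ℤ) :
    hexEigenvalue (fun i ↦ (v i : R)) = fun i ↦ ((hexEigenvalue v i : ℤ) : R) := by
  ext i
  fin_cases i <;> simp [hexEigenvalue]

end HexagonalCirculant

/-- The matrix `A_{3,II}` from Nikulin's list of all twelve symmetric hyperbolic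
generalized Cartan matrices of rank 3 with finite-volume fundamental chamber and
lattice Weyl vector of negative square:
(a) it is a symmetric generalized Cartan matrix;
(b) it has rank 3 over ℚ;
(c) the real quadratic form x ↦ xᵀAx is equivalent to the weighted sum of squares with
    weights (1,1,-1,0,…,0), i.e. A is hyperbolic of rank 3;
(d) it has a lattice Weyl vector of negative square: there is c ∈ ℚ^6 with
    Ac = -(1,…,1)ᵀ and cᵀAc < 0. -/
theorem stmt_10 :
    let A : Matrix (Fin 6) (Fin 6) ℤ :=
      !![2, -2, -10, -14, -10, -2;
        -2, 2, -2, -10, -14, -10;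
        -10, -2, 2, -2, -10, -14;
        -14, -10, -2, 2, -2, -10;
        -10, -14, -10, -2, 2, -2;
        -2, -10, -14, -10, -2, 2]
    -- (a) symmetric generalized Cartan matrix
    (Aᵀ = A ∧ (∀ i, A i i = 2) ∧ (∀ i j, i ≠ j → A i j ≤ 0)) ∧
    -- (b) rank 3 over ℚ
    (A.map ((↑·) : ℤ → ℚ)).rank = 3 ∧
    -- (c) hyperbolic of rank 3: x ↦ xᵀAx over ℝ is equivalent to the weighted
    -- sum of squares with weights (1,1,-1,0,…,0)
    (∃ P : Matrix (Fin 6) (Fin 6) ℝ, IsUnit P.det ∧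
      Pᵀ * A.map ((↑·) : ℤ → ℝ) * P = Matrix.diagonal ![(1:ℝ),1,-1,0,0,0]) ∧
    -- (d) lattice Weyl vector of negative square
    (∃ c : Fin 6 → ℚ, (∀ i, (A.map ((↑·) : ℤ → ℚ)).mulVec c i = -1) ∧
      c ⬝ᵥ (A.map ((↑·) : ℤ → ℚ)).mulVec c < 0) := by
  intro A
  let v : Fin 6 → ℤ := ![2, -2, -10, -14, -10, -2]
  have hA : A = circulant v := by decide +kernel
  have hv : ∀ i, v (-i) = v i := by decide
  have hv_nonpos : ∀ k, k ≠ 0 → v k ≤ 0 := by decide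
  have hspec : hexEigenvalue v = ![24, 24, -36, 0, 0, 0] := by decide
  rw [hA, map_circulant, map_circulant]
  refine ⟨⟨circulant_isSymm_iff.2 hv, fun i ↦ congrArg v (sub_self i),
    fun i j hij ↦ hv_nonpos _ (sub_ne_zero.2 hij)⟩, ?rank, ?signature, ?weyl⟩
  case rank =>
    rw [rank_circulant_eq_card_hexEigenvalue_ne_zero fun i ↦ congrArg Int.cast (hv i),
      hexEigenvalue_intCast, hspec]
    decide +kernel
  case signature =>
    obtain ⟨P, hP, hcongr⟩ := exists_congruence_circulant_diagonal_sign_hexEigenvalue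
      (v := fun i ↦ (v i : ℝ)) fun i ↦ congrArg Int.cast (hv i)
    refine ⟨P, hP, hcongr.trans (congrArg diagonal ?_)⟩
    rw [hexEigenvalue_intCast, hspec]
    ext i
    fin_cases i <;> simp
  case weyl =>
    have hsum : ∑ i, (v i : ℚ) < 0 := by decide +kernel
    exact exists_mulVec_eq_neg_one_of_mulVec_one_eq_smul (circulant_mulVec_one _) hsum
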